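/- Let H > 0 and t ∈ (0, 1/(4H)). Set g(ρ) = Hρ + t/ρ, r₁(t) = (1 − √(1 − 4tH))/(2H) and r₂(t) = (1 + √(1 − 4tH))/(2H). Then 0 < g(ρ) < 1 for every ρ ∈ (r₁(t), r₂(t)), and the function f(r) = ∫_{1/(2H)}^{r} g(ρ)/√(1 − g(ρ)²) dρ is well defined and C² on (r₁(t), r₂(t)) with f(1/(2H)) = 0 and f'/√(1+f'²) = g. Moreover, the radially symmetric function h_t(x,y) = f(√(x² + y²)) is a solution of (CMC) on the open annulus {(x,y) : r₁(t) < √(x² + y²) < r₂(t)}. -/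

import Mathlib

/-!
The equation `f' / √(1 + f'²) = g` says that `∇h_t / √(1 + |∇h_t|²) = (g(r)/r) (x, y)`, whose
divergence is `g' + g/r = 2H`; this is the reason `g(ρ) = Hρ + t/ρ` gives a solution.

On `(r₁, r₂)` the quadratic `Hρ² - ρ + t`, whose roots are `r₁` and `r₂`, is negative, which is
`g < 1` (`gfun_bounds`). Hence the integrand `φ = g/√(1 - g²)` is smooth there (`slope_contDiffAt`),
`f' = φ` by the fundamental theorem of calculus (`ffun_hasDerivAt`), and
`φ' = g'/(1 - g²)^{3/2}` (`slope_hasDerivAt`). With `ψ = φ/r` the gradient of `h_t` is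
`ψ(r) (x, y)` (`pdx_hfun`, `pdy_hfun`), so the nondivergence form of the equation reduces to
`φ' + φ (1 + φ²)/r = 2H (1 + φ²)^{3/2}`, and `1 + φ² = 1/(1 - g²)`.
-/

open Real MeasureTheory Filter Set

noncomputable section

/-- Euclidean norm on `ℝ × ℝ`. -/
def enorm2 (p : ℝ × ℝ) : ℝ := Real.sqrt (p.1 ^ 2 + p.2 ^ 2)

/-- Partial derivative in the `x` direction. -/
def pdx (u : ℝ × ℝ → ℝ) (p : ℝ × ℝ) : ℝ := fderiv ℝ u p (1, 0)

/-- Partial derivative in the `y` direction. -/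
def pdy (u : ℝ × ℝ → ℝ) (p : ℝ × ℝ) : ℝ := fderiv ℝ u p (0, 1)

/-- The area element `W_u = √(1 + |∇u|²)`. -/
def Wgraph (u : ℝ × ℝ → ℝ) (p : ℝ × ℝ) : ℝ :=
  Real.sqrt (1 + (pdx u p) ^ 2 + (pdy u p) ^ 2)

/-- Upward unit normal of the graph of `u`. -/
def normalVec (u : ℝ × ℝ → ℝ) (p : ℝ × ℝ) : ℝ × ℝ × ℝ :=
  (-pdx u p / Wgraph u p, -pdy u p / Wgraph u p, 1 / Wgraph u p)

/-- `u` is a (C²) solution of the constant mean curvature `H` equation on `Ω`. -/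
def IsCMCSolution (H : ℝ) (Ω : Set (ℝ × ℝ)) (u : ℝ × ℝ → ℝ) : Prop :=
  ContDiffOn ℝ 2 u Ω ∧ ∀ p ∈ Ω,
    (1 + (pdy u p) ^ 2) * pdx (fun q => pdx u q) p
      - 2 * (pdx u p) * (pdy u p) * pdy (fun q => pdx u q) p
      + (1 + (pdx u p) ^ 2) * pdy (fun q => pdy u q) p
    = 2 * H * (1 + (pdx u p) ^ 2 + (pdy u p) ^ 2) ^ ((3 : ℝ) / 2)

/-- `C` is a divergence line of the sequence `u` on `Ω`. -/
def IsDivergenceLine (H : ℝ) (Ω : Set (ℝ × ℝ)) (u : ℕ → ℝ × ℝ → ℝ)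
    (C : Set (ℝ × ℝ)) : Prop :=
  ∃ z₁ : ℝ × ℝ, C ⊆ Ω ∧ (∀ q ∈ C, enorm2 (q - z₁) = 1 / (2 * H)) ∧
    IsConnected C ∧ C.Nontrivial ∧
    ∃ φ : ℕ → ℕ, StrictMono φ ∧ ∀ Q ∈ C,
      Tendsto (fun n => normalVec (u (φ n)) Q) atTop
        (nhds (2 * H * (z₁.1 - Q.1), 2 * H * (z₁.2 - Q.2), 0))

/-- `g(ρ) = Hρ + t/ρ`. -/
def gfun (H t ρ : ℝ) : ℝ := H * ρ + t / ρ

/-- Inner radius of the annulus of definition. -/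
def r1 (H t : ℝ) : ℝ := (1 - Real.sqrt (1 - 4 * t * H)) / (2 * H)

/-- Outer radius of the annulus of definition. -/
def r2 (H t : ℝ) : ℝ := (1 + Real.sqrt (1 - 4 * t * H)) / (2 * H)

/-- The radial profile `f(r) = ∫_{1/(2H)}^r g(ρ)/√(1-g(ρ)²) dρ`. -/
def ffun (H t r : ℝ) : ℝ :=
  ∫ ρ in (1 / (2 * H))..r, gfun H t ρ / Real.sqrt (1 - (gfun H t ρ) ^ 2)

/-- The radially symmetric function `h_t(x,y) = f(√(x²+y²))`. -/
def hfun (H t : ℝ) (p : ℝ × ℝ) : ℝ := ffun H t (enorm2 p)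

/-! ### The bound on `g` and the radial profile -/

/-- The integrand `g/√(1 - g²)` of `ffun`, i.e. the slope `f'` of the radial profile. -/
def slope15 (H t ρ : ℝ) : ℝ := gfun H t ρ / Real.sqrt (1 - (gfun H t ρ) ^ 2)

lemma sqrt_disc_bounds {H t : ℝ} (hH : 0 < H) (ht : t ∈ Set.Ioo 0 (1 / (4 * H))) :
    0 < Real.sqrt (1 - 4 * t * H) ∧ Real.sqrt (1 - 4 * t * H) < 1 ∧
      Real.sqrt (1 - 4 * t * H) ^ 2 = 1 - 4 * t * H := by
  obtain ⟨h0, h1⟩ := ht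
  rw [lt_div_iff₀ (by positivity)] at h1
  have hp : 0 < t * H := mul_pos h0 hH
  refine ⟨Real.sqrt_pos.2 (by linarith), ?_, Real.sq_sqrt (by linarith)⟩
  rw [Real.sqrt_lt' one_pos]
  linarith

lemma r1_pos {H t : ℝ} (hH : 0 < H) (ht : t ∈ Set.Ioo 0 (1 / (4 * H))) : 0 < r1 H t := by
  have := (sqrt_disc_bounds hH ht).2.1
  exact div_pos (by linarith) (by positivity)

lemma center_mem {H t : ℝ} (hH : 0 < H) (ht : t ∈ Set.Ioo 0 (1 / (4 * H))) :
    1 / (2 * H) ∈ Set.Ioo (r1 H t) (r2 H t) := by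
  have := (sqrt_disc_bounds hH ht).1
  unfold r1 r2
  constructor
  · gcongr
    linarith
  · gcongr
    linarith

lemma gfun_bounds {H t : ℝ} (hH : 0 < H) (ht : t ∈ Set.Ioo 0 (1 / (4 * H))) {ρ : ℝ}
    (hρ : ρ ∈ Set.Ioo (r1 H t) (r2 H t)) : 0 < gfun H t ρ ∧ gfun H t ρ < 1 := by
  have hpos : 0 < ρ := (r1_pos hH ht).trans hρ.1
  have ht0 := ht.1
  obtain ⟨-, -, hsq⟩ := sqrt_disc_bounds hH ht
  obtain ⟨h1, h2⟩ := hρ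
  unfold r1 at h1
  unfold r2 at h2
  rw [div_lt_iff₀ (by positivity)] at h1
  rw [lt_div_iff₀ (by positivity)] at h2
  unfold gfun
  refine ⟨by positivity, ?_⟩
  -- `(2Hρ - 1)² < 1 - 4tH` rewritten as `Hρ² + t < ρ`
  have key : H * (H * ρ ^ 2 + t) < H * ρ := by
    nlinarith [mul_pos (sub_pos.2 h1) (sub_pos.2 h2)]
  have key' := lt_of_mul_lt_mul_left key hH.le
  have : H * ρ + t / ρ = (H * ρ ^ 2 + t) / ρ := by field_simp
  rw [this, div_lt_one hpos]
  exact key'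

lemma one_sub_gfun_sq_pos {H t : ℝ} (hH : 0 < H) (ht : t ∈ Set.Ioo 0 (1 / (4 * H))) {ρ : ℝ}
    (hρ : ρ ∈ Set.Ioo (r1 H t) (r2 H t)) : 0 < 1 - (gfun H t ρ) ^ 2 := by
  obtain ⟨h0, h1⟩ := gfun_bounds hH ht hρ
  nlinarith

lemma slope_contDiffAt {H t : ℝ} (hH : 0 < H) (ht : t ∈ Set.Ioo 0 (1 / (4 * H))) {ρ : ℝ}
    (hρ : ρ ∈ Set.Ioo (r1 H t) (r2 H t)) : ContDiffAt ℝ 1 (slope15 H t) ρ := by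
  have hpos : ρ ≠ 0 := ((r1_pos hH ht).trans hρ.1).ne'
  have h1 := one_sub_gfun_sq_pos hH ht hρ
  have hg : ContDiffAt ℝ 1 (gfun H t) ρ := by
    unfold gfun
    exact (contDiffAt_const.mul contDiffAt_id).add (contDiffAt_const.div contDiffAt_id hpos)
  exact hg.div ((contDiffAt_const.sub (hg.pow 2)).sqrt h1.ne') (Real.sqrt_pos.2 h1).ne'

/-- `φ' = g'/(1 - g²)^{3/2}` with `g' = H - t/ρ²`. -/
lemma slope_hasDerivAt {H t : ℝ} (hH : 0 < H) (ht : t ∈ Set.Ioo 0 (1 / (4 * H))) {ρ : ℝ}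
    (hρ : ρ ∈ Set.Ioo (r1 H t) (r2 H t)) :
    HasDerivAt (slope15 H t)
      ((H - t / ρ ^ 2) / Real.sqrt (1 - (gfun H t ρ) ^ 2) ^ 3) ρ := by
  have hpos : ρ ≠ 0 := ((r1_pos hH ht).trans hρ.1).ne'
  have h1 := one_sub_gfun_sq_pos hH ht hρ
  have hs := Real.sqrt_pos.2 h1
  have hsq := Real.sq_sqrt h1.le
  have hg : HasDerivAt (gfun H t) (H - t / ρ ^ 2) ρ := by
    have := ((hasDerivAt_id ρ).const_mul H).add ((hasDerivAt_inv hpos).const_mul t)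
    refine (this.congr_deriv ?_).congr_of_eventuallyEq (Eventually.of_forall fun x => ?_)
    · field_simp
      ring
    · simp [gfun, div_eq_mul_inv]
  have hq := hg.div (((hg.pow 2).const_sub 1).sqrt h1.ne') hs.ne'
  refine hq.congr_deriv ?_
  simp only [Pi.pow_apply]
  generalize Real.sqrt (1 - (gfun H t ρ) ^ 2) = s at *
  generalize gfun H t ρ = g at *
  generalize H - t / ρ ^ 2 = d
  have hs' := hs.ne'
  field_simp
  push_cast
  linear_combination 2 * d * hsq

lemma slope_intervalIntegrable {H t : ℝ} (hH : 0 < H) (ht : t ∈ Set.Ioo 0 (1 / (4 * H))) {r : ℝ}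
    (hr : r ∈ Set.Ioo (r1 H t) (r2 H t)) :
    IntervalIntegrable (slope15 H t) volume (1 / (2 * H)) r := by
  refine ContinuousOn.intervalIntegrable fun x hx => ?_
  exact (slope_contDiffAt hH ht
    (Set.ordConnected_Ioo.uIcc_subset (center_mem hH ht) hr hx)).continuousAt.continuousWithinAt

lemma ffun_hasDerivAt {H t : ℝ} (hH : 0 < H) (ht : t ∈ Set.Ioo 0 (1 / (4 * H))) {r : ℝ}
    (hr : r ∈ Set.Ioo (r1 H t) (r2 H t)) : HasDerivAt (ffun H t) (slope15 H t r) r := by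
  refine intervalIntegral.integral_hasDerivAt_right (slope_intervalIntegrable hH ht hr) ?_
    (slope_contDiffAt hH ht hr).continuousAt
  refine ContinuousOn.stronglyMeasurableAtFilter isOpen_Ioo (fun x hx => ?_) r hr
  exact (slope_contDiffAt hH ht hx).continuousAt.continuousWithinAt

lemma ffun_contDiffOn {H t : ℝ} (hH : 0 < H) (ht : t ∈ Set.Ioo 0 (1 / (4 * H))) :
    ContDiffOn ℝ 2 (ffun H t) (Set.Ioo (r1 H t) (r2 H t)) := by
  have h2 : (2 : WithTop ℕ∞) = 1 + 1 := by norm_num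
  rw [h2, contDiffOn_succ_iff_deriv_of_isOpen isOpen_Ioo]
  refine ⟨fun r hr => (ffun_hasDerivAt hH ht hr).differentiableAt.differentiableWithinAt,
    by simp, ?_⟩
  refine ContDiffOn.congr (f := slope15 H t)
    (fun r hr => (slope_contDiffAt hH ht hr).contDiffWithinAt) fun r hr => ?_
  exact (ffun_hasDerivAt hH ht hr).deriv

/-! ### Derivatives of radial functions -/

lemma sum_sq_pos_of_enorm2_pos {p : ℝ × ℝ} (hp : 0 < enorm2 p) : 0 < p.1 ^ 2 + p.2 ^ 2 :=
  Real.sqrt_pos.1 hp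

lemma enorm2_sq (p : ℝ × ℝ) : enorm2 p ^ 2 = p.1 ^ 2 + p.2 ^ 2 :=
  Real.sq_sqrt (by positivity)

/-- Chain rule for a radial function `ψ(√(x² + y²))` away from the origin. -/
lemma radial_hasFDerivAt {ψ : ℝ → ℝ} {d : ℝ} {p : ℝ × ℝ} (hp : 0 < enorm2 p)
    (hψ : HasDerivAt ψ d (enorm2 p)) :
    HasFDerivAt (fun q => ψ (enorm2 q))
      ((d * p.1 / enorm2 p) • ContinuousLinearMap.fst ℝ ℝ ℝ
        + (d * p.2 / enorm2 p) • ContinuousLinearMap.snd ℝ ℝ ℝ) p := by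
  have hx : HasFDerivAt (fun q : ℝ × ℝ => q.1) (ContinuousLinearMap.fst ℝ ℝ ℝ) p := hasFDerivAt_fst
  have hy : HasFDerivAt (fun q : ℝ × ℝ => q.2) (ContinuousLinearMap.snd ℝ ℝ ℝ) p := hasFDerivAt_snd
  have hn := ((hx.pow 2).add (hy.pow 2)).sqrt (sum_sq_pos_of_enorm2_pos hp).ne'
  have hc := hψ.comp_hasFDerivAt p hn
  refine hc.congr_fderiv ?_
  have he : Real.sqrt (p.1 ^ 2 + p.2 ^ 2) = enorm2 p := rfl
  ext <;> simp [he] <;> field_simp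

lemma annulus_isOpen (a b : ℝ) : IsOpen {p : ℝ × ℝ | a < enorm2 p ∧ enorm2 p < b} := by
  have hc : Continuous enorm2 := by
    unfold enorm2
    fun_prop
  exact (isOpen_lt continuous_const hc).inter (isOpen_lt hc continuous_const)

lemma hfun_hasFDerivAt {H t : ℝ} (hH : 0 < H) (ht : t ∈ Set.Ioo 0 (1 / (4 * H))) {p : ℝ × ℝ}
    (hp : enorm2 p ∈ Set.Ioo (r1 H t) (r2 H t)) :
    HasFDerivAt (hfun H t)
      ((slope15 H t (enorm2 p) * p.1 / enorm2 p) • ContinuousLinearMap.fst ℝ ℝ ℝ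
        + (slope15 H t (enorm2 p) * p.2 / enorm2 p) • ContinuousLinearMap.snd ℝ ℝ ℝ) p :=
  radial_hasFDerivAt ((r1_pos hH ht).trans hp.1) (ffun_hasDerivAt hH ht hp)

lemma pdx_hfun {H t : ℝ} (hH : 0 < H) (ht : t ∈ Set.Ioo 0 (1 / (4 * H))) {p : ℝ × ℝ}
    (hp : enorm2 p ∈ Set.Ioo (r1 H t) (r2 H t)) :
    pdx (hfun H t) p = slope15 H t (enorm2 p) / enorm2 p * p.1 := by
  rw [pdx, (hfun_hasFDerivAt hH ht hp).fderiv]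
  simp
  ring

lemma pdy_hfun {H t : ℝ} (hH : 0 < H) (ht : t ∈ Set.Ioo 0 (1 / (4 * H))) {p : ℝ × ℝ}
    (hp : enorm2 p ∈ Set.Ioo (r1 H t) (r2 H t)) :
    pdy (hfun H t) p = slope15 H t (enorm2 p) / enorm2 p * p.2 := by
  rw [pdy, (hfun_hasFDerivAt hH ht hp).fderiv]
  simp
  ring

lemma hfun_contDiffOn {H t : ℝ} (hH : 0 < H) (ht : t ∈ Set.Ioo 0 (1 / (4 * H))) :
    ContDiffOn ℝ 2 (hfun H t) {p : ℝ × ℝ | r1 H t < enorm2 p ∧ enorm2 p < r2 H t} := by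
  refine (ffun_contDiffOn hH ht).comp (fun p hp => ?_) fun p hp => hp
  have hpos := sum_sq_pos_of_enorm2_pos ((r1_pos hH ht).trans hp.1)
  exact (((contDiffAt_fst.pow 2).add (contDiffAt_snd.pow 2)).sqrt hpos.ne').contDiffWithinAt

/-! ### The mean curvature equation -/

lemma hfun_cmc {H t : ℝ} (hH : 0 < H) (ht : t ∈ Set.Ioo 0 (1 / (4 * H))) :
    IsCMCSolution H {p : ℝ × ℝ | r1 H t < enorm2 p ∧ enorm2 p < r2 H t} (hfun H t) := by
  refine ⟨hfun_contDiffOn hH ht, fun p hp => ?_⟩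
  have hr : 0 < enorm2 p := (r1_pos hH ht).trans hp.1
  have hnhds := (annulus_isOpen (r1 H t) (r2 H t)).mem_nhds hp
  have hψ := (slope_hasDerivAt hH ht hp).div (hasDerivAt_id (enorm2 p)) hr.ne'
  have hψF := radial_hasFDerivAt hr hψ
  have ex : (fun q => pdx (hfun H t) q) =ᶠ[nhds p]
      fun q => (slope15 H t / (id : ℝ → ℝ)) (enorm2 q) * q.1 := by
    filter_upwards [hnhds] with q hq
    exact pdx_hfun hH ht hq
  have ey : (fun q => pdy (hfun H t) q) =ᶠ[nhds p]
      fun q => (slope15 H t / (id : ℝ → ℝ)) (enorm2 q) * q.2 := by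
    filter_upwards [hnhds] with q hq
    exact pdy_hfun hH ht hq
  have hX := (hψF.mul (hasFDerivAt_fst (𝕜 := ℝ) (p := p))).congr_of_eventuallyEq ex
  have hY := (hψF.mul (hasFDerivAt_snd (𝕜 := ℝ) (p := p))).congr_of_eventuallyEq ey
  have hxx : pdx (fun q => pdx (hfun H t) q) p = _ := congrArg (fun L => L (1, 0)) hX.fderiv
  have hxy : pdy (fun q => pdx (hfun H t) q) p = _ := congrArg (fun L => L (0, 1)) hX.fderiv
  have hyy : pdy (fun q => pdy (hfun H t) q) p = _ := congrArg (fun L => L (0, 1)) hY.fderiv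
  rw [hxx, hxy, hyy, pdx_hfun hH ht hp, pdy_hfun hH ht hp]
  have h1 := one_sub_gfun_sq_pos hH ht hp
  have hs := Real.sqrt_pos.2 h1
  have hsq := Real.sq_sqrt h1.le
  have hr2 := enorm2_sq p
  have hφ : slope15 H t (enorm2 p)
    = gfun H t (enorm2 p) / Real.sqrt (1 - (gfun H t (enorm2 p)) ^ 2) := rfl
  have hg : gfun H t (enorm2 p) = H * enorm2 p + t / enorm2 p := rfl
  simp only [add_apply, smul_apply, smul_eq_mul,
    ContinuousLinearMap.coe_fst', ContinuousLinearMap.coe_snd', Pi.div_apply, id]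
  rw [hφ]
  generalize Real.sqrt (1 - (gfun H t (enorm2 p)) ^ 2) = s at *
  generalize gfun H t (enorm2 p) = g at *
  generalize enorm2 p = r at *
  obtain ⟨x, y⟩ := p
  simp only at *
  -- `1 + |∇h|² = 1/s²` where `s = √(1 - g²)`
  have hW : 1 + (g / s / r * x) ^ 2 + (g / s / r * y) ^ 2 = (s⁻¹) ^ (2 : ℝ) := by
    rw [Real.rpow_two]
    field_simp
    linear_combination r ^ 2 * hsq - g ^ 2 * hr2
  rw [hW, ← Real.rpow_mul (by positivity)]
  have h3 : (2 : ℝ) * (3 / 2) = (3 : ℕ) := by norm_num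
  rw [h3, Real.rpow_natCast]
  have ht' : t = r * g - H * r ^ 2 := by
    rw [hg]
    field_simp
    ring
  -- collapse the Hessian expression to its radial form, for `ψ = φ/r`, where `D` is the derivative of `ψ` at `r`
  have radial : ∀ ψ D : ℝ,
      (1 + (ψ * y) ^ 2) * (ψ * 1 + x * (D * x / r * 1 + D * y / r * 0))
        - 2 * (ψ * x) * (ψ * y) * (ψ * 0 + x * (D * x / r * 0 + D * y / r * 1))
        + (1 + (ψ * x) ^ 2) * (ψ * 1 + y * (D * x / r * 0 + D * y / r * 1))
      = D * r + 2 * ψ + ψ ^ 3 * r ^ 2 := by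
    intro ψ D
    field_simp
    linear_combination (-D - r * ψ ^ 3) * hr2
  rw [radial, ht']
  field_simp
  linear_combination g * hsq

/-- for `0 < t < 1/(4H)`, the radial profile `f` is well defined and C² on
`(r₁(t), r₂(t))`, vanishes at `1/(2H)`, satisfies `f'/√(1+f'²) = g`, and `h_t` is a
solution of (CMC) on the annulus `{r₁(t) < √(x²+y²) < r₂(t)}`. -/
theorem stmt_15 (H t : ℝ) (hH : 0 < H) (ht : t ∈ Set.Ioo 0 (1 / (4 * H))) :
    (∀ ρ ∈ Set.Ioo (r1 H t) (r2 H t), 0 < gfun H t ρ ∧ gfun H t ρ < 1) ∧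
    (∀ r ∈ Set.Ioo (r1 H t) (r2 H t),
      IntervalIntegrable (fun ρ => gfun H t ρ / Real.sqrt (1 - (gfun H t ρ) ^ 2))
        volume (1 / (2 * H)) r) ∧
    ContDiffOn ℝ 2 (ffun H t) (Set.Ioo (r1 H t) (r2 H t)) ∧
    ffun H t (1 / (2 * H)) = 0 ∧
    (∀ r ∈ Set.Ioo (r1 H t) (r2 H t),
      deriv (ffun H t) r / Real.sqrt (1 + (deriv (ffun H t) r) ^ 2) = gfun H t r) ∧
    IsCMCSolution H {p : ℝ × ℝ | r1 H t < enorm2 p ∧ enorm2 p < r2 H t} (hfun H t) := by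
  refine ⟨fun ρ hρ => gfun_bounds hH ht hρ, fun r hr => slope_intervalIntegrable hH ht hr,
    ffun_contDiffOn hH ht, intervalIntegral.integral_same, fun r hr => ?_, hfun_cmc hH ht⟩
  have h1 := one_sub_gfun_sq_pos hH ht hr
  have hs := Real.sqrt_pos.2 h1
  have hsq := Real.sq_sqrt h1.le
  rw [(ffun_hasDerivAt hH ht hr).deriv, slope15]
  generalize Real.sqrt (1 - (gfun H t r) ^ 2) = s at *
  generalize gfun H t r = g at *
  have hW : 1 + (g / s) ^ 2 = (s⁻¹) ^ 2 := by
    field_simp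
    linarith
  rw [hW, Real.sqrt_sq (by positivity)]
  field_simp
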